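/- arXiv:1108.3367 — 2 statements merged into one kernel-verified Lean document; each statement's English description precedes it below -/
import Mathlib

section
/- Let p₋₂, p₋₁, p₋₁', p₀, p₀', q₀, q₀', q₁, q₁' be complex numbers with p₋₂ ≠ 0 and q₀' ≠ 0, and let a, a', b, b' : ℕ → ℂ satisfy a_{n+1} = p₋₂·n² + p₋₁·n + p₀ + O(n^{−1}), a'_n = p₋₂·n² + p₋₁'·n + p₀' + O(n^{−1}) (equal leading coefficients, the class D⁼₂₀), b_{n+1} = q₀ + q₁·n^{−1} + O(n^{−2}), b'_n = q₀' + q₁'·n^{−1} + O(n^{−2}). Suppose X : ℕ → ℂ satisfies the tail recurrence (b'_n·b_{n+1} + a_{n+1})·X_n + b'_n·X_n·X_{n+1} − a'_n·X_{n+1} − a'_n·b_{n+1} = 0 for all n ≥ 1, and X_n = τ₋₂·n + τ₋₁·n^{1/2} + τ₀ + τ₁·n^{−1/2} + O(n^{−1}) for some complex τ₋₂, τ₋₁, τ₀, τ₁. Then τ₋₁·(2τ₋₂·q₀' + p₋₁ − p₋₁' − p₋₂/2) = 0 and τ₀·(2τ₋₂·q₀' + p₋₁ − p₋₁') = p₋₁'·q₀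 + p₋₂·q₁ − τ₋₁²·q₀' − (q₁' + q₀')·τ₋₂² + (p₋₁' + p₀' − p₀ − q₀'·q₀)·τ₋₂. -/
open Asymptotics Filter

/-- `n^s` as a complex number, for `n : ℕ` and a real exponent `s`. -/
noncomputable def rpowC (s : ℝ) (n : ℕ) : ℂ := (((n : ℝ) ^ s : ℝ) : ℂ)

/-!
Put `t = n^(-1/2)`. Multiplied by `t⁴`, the recurrence expresses `p₋₂ (r_n - r_{n+1})`, where `r_n`
is the remainder of `X_n` after the term `τ₀`, as a combination of sequences that expand as
`c₀ + c₁ t + c₂ t² + o(t²)`. The increments of the bounded sequence `r` cannot be asymptotic to a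
nonzero multiple of `1`, `t` or `t² = 1 / n`, because none of these is summable. So all three
coefficients of the combination vanish; those of `t` and `t²` are the two claimed equations.
-/

open Topology

theorem isLittleO_sq_self {α 𝕜 : Type*} [NormedField 𝕜] {l : Filter α} {t : α → 𝕜}
    (ht : Tendsto t l (𝓝 0)) : (fun x => t x ^ 2) =o[l] t :=
  ((isLittleO_pow_id one_lt_two).comp_tendsto ht :)

/-- The second-order asymptotic expansion `f = c₀ + c₁ t + c₂ t² + o(t²)` along a filter `l`, in
powers of a gauge `t`, which is in practice a null function. -/
def HasQuadExpansion {α 𝕜 : Type*} [NormedField 𝕜] (l : Filter α) (t f : α → 𝕜) (c₀ c₁ c₂ : 𝕜) :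
    Prop :=
  (fun x => f x - (c₀ + c₁ * t x + c₂ * t x ^ 2)) =o[l] fun x => t x ^ 2

namespace HasQuadExpansion

variable {α 𝕜 : Type*} [NormedField 𝕜] {l : Filter α} {t f g : α → 𝕜} {c₀ c₁ c₂ d₀ d₁ d₂ : 𝕜}

theorem const (c : 𝕜) : HasQuadExpansion l t (fun _ => c) c 0 0 := by
  simp [HasQuadExpansion]

theorem sq_mul (hf : Tendsto f l (𝓝 c₀)) :
    HasQuadExpansion l t (fun x => t x ^ 2 * f x) 0 0 c₀ := by
  have hf₀ : (fun x => f x - c₀) =o[l] fun _ => (1 : 𝕜) :=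
    (isLittleO_one_iff 𝕜).2 (tendsto_sub_nhds_zero_iff.2 hf)
  exact ((isBigO_refl (fun x => t x ^ 2) l).mul_isLittleO hf₀).congr
    (fun x => by ring) (fun x => mul_one _)

theorem congr (hf : HasQuadExpansion l t f c₀ c₁ c₂) (hfg : f =ᶠ[l] g) :
    HasQuadExpansion l t g c₀ c₁ c₂ :=
  IsLittleO.congr' hf (hfg.sub .rfl) .rfl

theorem add (hf : HasQuadExpansion l t f c₀ c₁ c₂) (hg : HasQuadExpansion l t g d₀ d₁ d₂) :
    HasQuadExpansion l t (fun x => f x + g x) (c₀ + d₀) (c₁ + d₁) (c₂ + d₂) :=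
  (IsLittleO.add hf hg).congr_left fun x => by ring

theorem sub (hf : HasQuadExpansion l t f c₀ c₁ c₂) (hg : HasQuadExpansion l t g d₀ d₁ d₂) :
    HasQuadExpansion l t (fun x => f x - g x) (c₀ - d₀) (c₁ - d₁) (c₂ - d₂) :=
  (IsLittleO.sub hf hg).congr_left fun x => by ring

theorem const_mul (c : 𝕜) (hf : HasQuadExpansion l t f c₀ c₁ c₂) :
    HasQuadExpansion l t (fun x => c * f x) (c * c₀) (c * c₁) (c * c₂) :=
  (IsLittleO.const_mul_left hf c).congr_left fun x => by ring

theorem sub_isLittleO (ht : Tendsto t l (𝓝 0)) (hf : HasQuadExpansion l t f c₀ c₁ c₂) :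
    (fun x => f x - (c₀ + c₁ * t x)) =o[l] t := by
  have ht₂ := isLittleO_sq_self ht
  exact ((hf.trans ht₂).add (ht₂.const_mul_left c₂)).congr_left fun x => by ring

theorem tendsto (ht : Tendsto t l (𝓝 0)) (hf : HasQuadExpansion l t f c₀ c₁ c₂) :
    Tendsto f l (𝓝 c₀) := by
  have hrem := (hf.sub_isLittleO ht).trans_tendsto ht
  simpa using hrem.add ((ht.const_mul c₁).const_add c₀)

theorem mul (ht : Tendsto t l (𝓝 0)) (hf : HasQuadExpansion l t f c₀ c₁ c₂)
    (hg : HasQuadExpansion l t g d₀ d₁ d₂) :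
    HasQuadExpansion l t (fun x => f x * g x) (c₀ * d₀) (c₀ * d₁ + c₁ * d₀)
      (c₀ * d₂ + c₁ * d₁ + c₂ * d₀) := by
  set P : α → 𝕜 := fun x => c₀ + c₁ * t x + c₂ * t x ^ 2
  have hP : Tendsto P l (𝓝 c₀) := by
    simpa using ((ht.const_mul c₁).const_add c₀).add ((ht.pow 2).const_mul c₂)
  have hfg : (fun x => (f x - P x) * g x) =o[l] fun x => t x ^ 2 * 1 :=
    hf.mul_isBigO ((hg.tendsto ht).isBigO_one 𝕜)
  have hPg : (fun x => (g x - (d₀ + d₁ * t x + d₂ * t x ^ 2)) * P x) =o[l] fun x => t x ^ 2 * 1 :=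
    IsLittleO.mul_isBigO hg (hP.isBigO_one 𝕜)
  have htail : (fun x => t x ^ 2 * ((c₁ * d₂ + c₂ * d₁) * t x + c₂ * d₂ * t x ^ 2)) =o[l]
      fun x => t x ^ 2 * 1 := by
    refine (isBigO_refl _ l).mul_isLittleO ((isLittleO_one_iff 𝕜).2 ?_)
    simpa using (ht.const_mul (c₁ * d₂ + c₂ * d₁)).add ((ht.pow 2).const_mul (c₂ * d₂))
  exact ((hfg.add hPg).add htail).congr (fun x => by simp only [P]; ring) (fun x => mul_one _)

end HasQuadExpansion

/-- Summed up, the increments of `r` stay bounded, whereas the partial sums of `u` diverge. -/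
theorem eq_zero_of_sub_succ_sub_smul_isLittleO {E : Type*} [NormedAddCommGroup E]
    [NormedSpace ℝ E] {r : ℕ → E} {u : ℕ → ℝ} {c : E} (hr : r =O[atTop] fun _ => (1 : ℝ))
    (hu : ∀ n, 0 ≤ u n) (hu_sum : ¬Summable u)
    (h : (fun n => r n - r (n + 1) - u n • c) =o[atTop] u) : c = 0 := by
  set U : ℕ → ℝ := fun n => ∑ i ∈ Finset.range n, u i
  have hU : Tendsto U atTop atTop := (not_summable_iff_tendsto_nat_atTop_of_nonneg hu).1 hu_sum
  have htelescope : (fun n => r 0 - r n - U n • c) =o[atTop] U :=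
    (h.sum_range hu hU).congr_left fun n => by
      rw [Finset.sum_sub_distrib, Finset.sum_range_sub', Finset.sum_smul]
  have hbounded : (fun n => r 0 - r n) =o[atTop] U :=
    ((isBigO_const_const (r 0) one_ne_zero atTop).sub hr).trans_isLittleO
      ((isLittleO_const_left).2 (.inr (tendsto_norm_atTop_atTop.comp hU)))
  have hUc : (fun n => U n • c) =o[atTop] U :=
    (hbounded.sub htelescope).congr_left fun n => sub_sub_cancel _ _
  by_contra hc
  have hU_le : U =O[atTop] fun n => U n • c :=
    .of_bound ‖c‖⁻¹ (.of_forall fun n => by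
      rw [norm_smul, mul_comm, mul_assoc, mul_inv_cancel₀ (norm_ne_zero_iff.2 hc), mul_one])
  exact isLittleO_irrefl ((hU.eventually_ne_atTop 0).frequently) (hU_le.trans_isLittleO hUc)

theorem HasQuadExpansion.eq_zero_of_sub_succ {t : ℕ → ℝ} {r : ℕ → ℂ} {c₀ c₁ c₂ : ℂ}
    (ht : Tendsto t atTop (𝓝 0)) (ht_nonneg : ∀ n, 0 ≤ t n)
    (ht_sum : ¬Summable fun n => t n ^ 2) (hr : r =O[atTop] fun _ => (1 : ℝ))
    (h : HasQuadExpansion atTop (fun n => (t n : ℂ)) (fun n => r n - r (n + 1)) c₀ c₁ c₂) :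
    c₀ = 0 ∧ c₁ = 0 ∧ c₂ = 0 := by
  have htC : Tendsto (fun n => (t n : ℂ)) atTop (𝓝 0) := by
    simpa using! (Complex.continuous_ofReal.tendsto 0).comp ht
  have ht_sum₁ : ¬Summable t := fun hs =>
    ht_sum (summable_of_isBigO_nat hs (isLittleO_sq_self ht).isBigO)
  have h₀ : c₀ = 0 := by
    refine eq_zero_of_sub_succ_sub_smul_isLittleO hr (u := fun _ => 1) (fun _ => zero_le_one)
      (by simp [summable_const_iff]) ((isLittleO_one_iff ℝ).2 ?_)
    simpa using (h.tendsto htC).sub_const c₀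
  subst h₀
  have h₁ : c₁ = 0 := by
    refine eq_zero_of_sub_succ_sub_smul_isLittleO hr ht_nonneg ht_sum₁ (.of_norm_right ?_)
    simpa [mul_comm] using (h.sub_isLittleO htC).norm_right
  subst h₁
  refine ⟨rfl, rfl, eq_zero_of_sub_succ_sub_smul_isLittleO hr (fun n => sq_nonneg (t n)) ht_sum
    (.of_norm_right ?_)⟩
  simpa [HasQuadExpansion, mul_comm] using IsLittleO.norm_right h

theorem tendsto_natCast_rpow_neg {s : ℝ} (hs : 0 < s) :
    Tendsto (fun n : ℕ => (n : ℝ) ^ (-s)) atTop (𝓝 0) :=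
  (tendsto_rpow_neg_atTop hs).comp tendsto_natCast_atTop_atTop

theorem natCast_rpow_isLittleO {s u : ℝ} (hsu : s < u) :
    (fun n : ℕ => (n : ℝ) ^ s) =o[atTop] fun n : ℕ => (n : ℝ) ^ u := by
  have hdiff : (fun n : ℕ => (n : ℝ) ^ (-(u - s))) =o[atTop] fun _ => (1 : ℝ) :=
    (isLittleO_one_iff ℝ).2 (tendsto_natCast_rpow_neg (sub_pos.2 hsu))
  refine (hdiff.mul_isBigO (isBigO_refl (fun n : ℕ => (n : ℝ) ^ u) atTop)).congr' ?_
    (.of_forall fun n => one_mul _)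
  filter_upwards [eventually_gt_atTop 0] with n hn
  rw [← Real.rpow_add (Nat.cast_pos.2 hn), neg_sub, sub_add_cancel]

theorem tendsto_rpowC_neg {s : ℝ} (hs : 0 < s) : Tendsto (rpowC (-s)) atTop (𝓝 0) := by
  simpa using! (Complex.continuous_ofReal.tendsto 0).comp (tendsto_natCast_rpow_neg hs)

theorem HasQuadExpansion.eq_zero_of_sub_succ_rpowC_neg_half {r : ℕ → ℂ} {c₀ c₁ c₂ : ℂ}
    (hr : r =O[atTop] fun _ => (1 : ℝ))
    (h : HasQuadExpansion atTop (rpowC (-(1 / 2))) (fun n => r n - r (n + 1)) c₀ c₁ c₂) :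
    c₀ = 0 ∧ c₁ = 0 ∧ c₂ = 0 := by
  refine HasQuadExpansion.eq_zero_of_sub_succ (tendsto_natCast_rpow_neg one_half_pos)
    (fun n => by positivity) (fun hsum => ?_) hr h
  refine Real.not_summable_natCast_inv (hsum.congr fun n => ?_)
  rw [← Real.rpow_mul_natCast n.cast_nonneg, ← Real.rpow_neg_one]
  norm_num

theorem rpowC_add {n : ℕ} (hn : n ≠ 0) (s u : ℝ) : rpowC (s + u) n = rpowC s n * rpowC u n := by
  simp [rpowC, Real.rpow_add (Nat.cast_pos.2 (Nat.pos_of_ne_zero hn))]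

theorem rpowC_neg_mul {n : ℕ} (hn : n ≠ 0) (s : ℝ) : rpowC (-s) n * rpowC s n = 1 := by
  rw [← rpowC_add hn, neg_add_cancel]
  simp [rpowC]

theorem rpowC_neg_half_sq {n : ℕ} (hn : n ≠ 0) : rpowC (-(1 / 2)) n ^ 2 = rpowC (-1) n := by
  rw [sq, ← rpowC_add hn]
  norm_num

theorem rpowC_neg_half_sq_mul {n : ℕ} (hn : n ≠ 0) : rpowC (-(1 / 2)) n ^ 2 * n = 1 := by
  rw [rpowC_neg_half_sq hn]
  simpa [rpowC] using rpowC_neg_mul hn 1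

theorem abs_sqrt_sub_sqrt_add_one_le {x : ℝ} (hx : 0 < x) :
    |√x - √(x + 1) + 1 / 2 * (√x)⁻¹| ≤ (√x)⁻¹ ^ 3 := by
  have hu : 0 < √x := Real.sqrt_pos.2 hx
  have hsq : √(x + 1) ^ 2 = √x ^ 2 + 1 := by rw [Real.sq_sqrt hx.le, Real.sq_sqrt (by positivity)]
  set u := √x
  set v := √(x + 1)
  have hv : 0 ≤ v := Real.sqrt_nonneg _
  have hexact : u - v + 1 / 2 * u⁻¹ = (2 * u * (u + v) ^ 2)⁻¹ := by
    field_simp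
    linear_combination (1 - 2 * u * (u + v)) * hsq
  rw [hexact, abs_of_pos (by positivity), inv_pow]
  gcongr
  nlinarith [pow_pos hu 3, mul_nonneg hu.le (sq_nonneg v), mul_nonneg (sq_nonneg u) hv]

theorem hasQuadExpansion_rpowC_half_sub_succ :
    HasQuadExpansion atTop (rpowC (-(1 / 2))) (fun n => rpowC (1 / 2) n - rpowC (1 / 2) (n + 1))
      0 (-(1 / 2)) 0 := by
  set t : ℕ → ℂ := rpowC (-(1 / 2)) with ht_def
  have ht : Tendsto t atTop (𝓝 0) := tendsto_rpowC_neg one_half_pos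
  have hcube : (fun n => t n ^ 3) =o[atTop] fun n => t n ^ 2 :=
    ((isLittleO_pow_pow (m := 2) (n := 3) (by norm_num)).comp_tendsto ht :)
  refine IsBigO.trans_isLittleO (.of_bound 1 ?_) hcube
  filter_upwards [eventually_gt_atTop 0] with n hn
  have hsqrt := abs_sqrt_sub_sqrt_add_one_le (Nat.cast_pos.2 hn)
  have hreal : rpowC (1 / 2) n - rpowC (1 / 2) (n + 1) - (0 + -(1 / 2) * t n + 0 * t n ^ 2)
      = ((√(n : ℝ) - √(n + 1) + 1 / 2 * (√(n : ℝ))⁻¹ : ℝ) : ℂ) := by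
    simp only [ht_def, rpowC, Real.sqrt_eq_rpow, Real.rpow_neg n.cast_nonneg]
    push_cast
    ring
  have hgauge : ‖t n ^ 3‖ = (√(n : ℝ))⁻¹ ^ 3 := by
    rw [ht_def, rpowC, norm_pow, Complex.norm_of_nonneg (by positivity),
      Real.rpow_neg n.cast_nonneg, Real.sqrt_eq_rpow]
  rwa [hreal, hgauge, Complex.norm_real, Real.norm_eq_abs, one_mul]

theorem hasQuadExpansion_of_sub_isLittleO_rpow_neg_one {f : ℕ → ℂ} {c d : ℂ}
    (hf : (fun n : ℕ => f n - (c + d * rpowC (-1) n)) =o[atTop] fun n : ℕ => (n : ℝ) ^ (-(1 : ℝ))) :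
    HasQuadExpansion atTop (rpowC (-(1 / 2))) f c 0 d := by
  have hgauge : rpowC (-1) =ᶠ[atTop] fun n => rpowC (-(1 / 2)) n ^ 2 := by
    filter_upwards [eventually_ne_atTop 0] with n hn using (rpowC_neg_half_sq hn).symm
  have hfC : (fun n : ℕ => f n - (c + d * rpowC (-1) n)) =o[atTop] rpowC (-1) :=
    hf.trans_isBigO (.of_bound 1 (by simp [rpowC]))
  refine hfC.congr' ?_ hgauge
  filter_upwards [hgauge] with n hn
  rw [hn]
  ring

/-- The term `p n`, unbounded in the gauge `n^(-1/2)`, is split off. -/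
theorem hasQuadExpansion_sq_mul_sub_of_quadratic {f : ℕ → ℂ} {p c d : ℂ}
    (hf : Tendsto (fun n : ℕ => f n - (p * n ^ 2 + c * n + d)) atTop (𝓝 0)) :
    HasQuadExpansion atTop (rpowC (-(1 / 2))) (fun n => rpowC (-(1 / 2)) n ^ 2 * f n - p * n)
      c 0 d := by
  have hlow : Tendsto (fun n : ℕ => f n - (p * n ^ 2 + c * n)) atTop (𝓝 d) := by
    rw [← zero_add d]
    exact (hf.add_const d).congr fun n => by ring
  have hexp := (HasQuadExpansion.const c).add
    (HasQuadExpansion.sq_mul (t := rpowC (-(1 / 2))) hlow)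
  simp only [add_zero, zero_add] at hexp
  refine hexp.congr ?_
  filter_upwards [eventually_ne_atTop 0] with n hn
  linear_combination -(p * n + c) * rpowC_neg_half_sq_mul hn

/-- The part `τ₋₂ n + τ₋₁ n^(1/2) + τ₀` of the expansion of a tail `X_n`, which determines `X_n` up
to a null sequence. -/
noncomputable def tailPrincipalPart (τm2 τm1 τ0 : ℂ) (n : ℕ) : ℂ :=
  τm2 * n + τm1 * rpowC (1 / 2) n + τ0

theorem hasQuadExpansion_tailPrincipalPart_sub_succ (τm2 τm1 τ0 : ℂ) :
    HasQuadExpansion atTop (rpowC (-(1 / 2)))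
      (fun n => tailPrincipalPart τm2 τm1 τ0 n - tailPrincipalPart τm2 τm1 τ0 (n + 1))
      (-τm2) (-τm1 / 2) 0 := by
  have hexp := (HasQuadExpansion.const (-τm2)).add
    (hasQuadExpansion_rpowC_half_sub_succ.const_mul τm1)
  convert hexp.congr (.of_forall fun n => ?_) using 1
  · ring
  · ring
  · ring
  · simp only [tailPrincipalPart]
    push_cast
    ring

section

variable {X : ℕ → ℂ} {τm2 τm1 τ0 : ℂ}

theorem tendsto_sub_tailPrincipalPart {τ1 : ℂ}
    (hX : (fun n : ℕ => X n
        - (τm2 * n + τm1 * rpowC (1 / 2) n + τ0 + τ1 * rpowC (-(1 / 2)) n))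
      =O[atTop] fun n : ℕ => (n : ℝ) ^ (-(1 : ℝ))) :
    Tendsto (fun n => X n - tailPrincipalPart τm2 τm1 τ0 n) atTop (𝓝 0) := by
  have hrem := (hX.trans_tendsto (tendsto_natCast_rpow_neg one_pos)).add
    ((tendsto_rpowC_neg one_half_pos).const_mul τ1)
  rw [mul_zero, add_zero] at hrem
  exact hrem.congr fun n => by rw [tailPrincipalPart]; ring

theorem tendsto_tail_sub_succ
    (hX : Tendsto (fun n => X n - tailPrincipalPart τm2 τm1 τ0 n) atTop (𝓝 0)) :
    Tendsto (fun n => X n - X (n + 1)) atTop (𝓝 (-τm2)) := by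
  have hmain := (hasQuadExpansion_tailPrincipalPart_sub_succ τm2 τm1 τ0).tendsto
    (tendsto_rpowC_neg one_half_pos)
  have hrem := hX.sub (hX.comp (tendsto_add_atTop_nat 1))
  rw [sub_zero] at hrem
  rw [← add_zero (-τm2)]
  refine (hmain.add hrem).congr fun n => ?_
  rw [Function.comp_apply]
  ring

theorem hasQuadExpansion_sq_mul_tail
    (hX : Tendsto (fun n => X n - tailPrincipalPart τm2 τm1 τ0 n) atTop (𝓝 0)) :
    HasQuadExpansion atTop (rpowC (-(1 / 2))) (fun n => rpowC (-(1 / 2)) n ^ 2 * X n)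
      τm2 τm1 τ0 := by
  refine ((isBigO_refl (fun n => rpowC (-(1 / 2)) n ^ 2) atTop).mul_isLittleO
    ((isLittleO_one_iff ℂ).2 hX)).congr' ?_ (.of_forall fun n => mul_one _)
  filter_upwards [eventually_ne_atTop 0] with n hn
  simp only [tailPrincipalPart]
  linear_combination -τm2 * rpowC_neg_half_sq_mul hn
    - rpowC (-(1 / 2)) n * τm1 * rpowC_neg_mul hn (1 / 2)

theorem hasQuadExpansion_sq_mul_tail_succ
    (hX : Tendsto (fun n => X n - tailPrincipalPart τm2 τm1 τ0 n) atTop (𝓝 0)) :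
    HasQuadExpansion atTop (rpowC (-(1 / 2))) (fun n => rpowC (-(1 / 2)) n ^ 2 * X (n + 1))
      τm2 τm1 (τ0 + τm2) := by
  have hexp := (hasQuadExpansion_sq_mul_tail hX).sub
    (.sq_mul (tendsto_tail_sub_succ hX))
  simp only [sub_zero, sub_neg_eq_add] at hexp
  exact hexp.congr (.of_forall fun n => by ring)

end

/-- The tail recurrence multiplied by `t⁴`, where `t² n = 1`. The common leading term `p n²` of `a`
and `a'` contributes only `p (x - x')`. -/
theorem tail_recurrence_rescaled {R : Type*} [CommRing R] {t n p a a' b b' x x' : R}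
    (htn : t ^ 2 * n = 1)
    (hrec : (b' * b + a) * x + b' * x * x' - a' * x' - a' * b = 0) :
    p * (x - x') + (t ^ 2 * a - p * n) * (t ^ 2 * x) - (t ^ 2 * a' - p * n) * (t ^ 2 * x')
      + b' * (t ^ 2 * x * (t ^ 2 * x')) + t ^ 2 * (b' * (b * (t ^ 2 * x)))
      - (p + t ^ 2 * (t ^ 2 * a' - p * n)) * b = 0 := by
  linear_combination t ^ 4 * hrec - p * (x - x' - b) * htn

theorem stmt7_general (pm2 pm1 pm1' p₀ p₀' q₀ q₀' q₁ q₁' : ℂ) (a a' b b' : ℕ → ℂ)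
    (ha : Tendsto (fun n : ℕ => a (n + 1) - (pm2 * n ^ 2 + pm1 * n + p₀)) atTop (𝓝 0))
    (ha' : Tendsto (fun n : ℕ => a' n - (pm2 * n ^ 2 + pm1' * n + p₀')) atTop (𝓝 0))
    (hb : (fun n : ℕ => b (n + 1) - (q₀ + q₁ * rpowC (-1) n))
      =o[atTop] fun n : ℕ => (n : ℝ) ^ (-(1 : ℝ)))
    (hb' : (fun n : ℕ => b' n - (q₀' + q₁' * rpowC (-1) n))
      =o[atTop] fun n : ℕ => (n : ℝ) ^ (-(1 : ℝ)))
    (X : ℕ → ℂ)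
    (hrec : ∀ᶠ n : ℕ in atTop,
      (b' n * b (n + 1) + a (n + 1)) * X n + b' n * X n * X (n + 1)
        - a' n * X (n + 1) - a' n * b (n + 1) = 0)
    (τm2 τm1 τ0 : ℂ)
    (hX : Tendsto (fun n : ℕ => X n - tailPrincipalPart τm2 τm1 τ0 n) atTop (𝓝 0)) :
    τm1 * (2 * τm2 * q₀' + pm1 - pm1' - pm2 / 2) = 0 ∧
      τ0 * (2 * τm2 * q₀' + pm1 - pm1')
        = pm1' * q₀ + pm2 * q₁ - τm1 ^ 2 * q₀' - (q₁' + q₀') * τm2 ^ 2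
          + (pm1' + p₀' - p₀ - q₀' * q₀) * τm2 := by
  have ht : Tendsto (rpowC (-(1 / 2))) atTop (𝓝 0) := tendsto_rpowC_neg one_half_pos
  set r : ℕ → ℂ := fun n => X n - tailPrincipalPart τm2 τm1 τ0 n
  have hA := hasQuadExpansion_sq_mul_sub_of_quadratic ha
  have hA' := hasQuadExpansion_sq_mul_sub_of_quadratic ha'
  have hB := hasQuadExpansion_of_sub_isLittleO_rpow_neg_one hb
  have hB' := hasQuadExpansion_of_sub_isLittleO_rpow_neg_one hb'
  have hD := hasQuadExpansion_tailPrincipalPart_sub_succ τm2 τm1 τ0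
  have hY := hasQuadExpansion_sq_mul_tail hX
  have hY' := hasQuadExpansion_sq_mul_tail_succ hX
  have hB'BY := hB'.mul ht (hB.mul ht hY)
  have hexp := (((((hD.const_mul pm2).add (hA.mul ht hY)).sub (hA'.mul ht hY')).add
    (hB'.mul ht (hY.mul ht hY'))).add (.sq_mul (hB'BY.tendsto ht))).sub
    (((HasQuadExpansion.const pm2).add (.sq_mul (hA'.tendsto ht))).mul ht hB)
  have hincrement := hexp.congr (g := fun n => -pm2 * r n - -pm2 * r (n + 1)) (by
    filter_upwards [hrec, eventually_ne_atTop 0] with n hn hn₀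
    simp only [r]
    linear_combination tail_recurrence_rescaled (p := pm2) (rpowC_neg_half_sq_mul hn₀) hn)
  have hbounded : (fun n => -pm2 * r n) =O[atTop] fun _ => (1 : ℝ) :=
    (hX.const_mul (-pm2)).isBigO_one ℝ
  obtain ⟨-, h₁, h₂⟩ := hincrement.eq_zero_of_sub_succ_rpowC_neg_half hbounded
  constructor
  · linear_combination h₁
  · linear_combination h₂

/-- Class D⁼₂₀: the equations satisfied by `τ₋₁` and `τ₀`. -/
theorem stmt7 (pm2 pm1 pm1' p₀ p₀' q₀ q₀' q₁ q₁' : ℂ)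
    (hpm2 : pm2 ≠ 0) (hq₀' : q₀' ≠ 0)
    (a a' b b' : ℕ → ℂ)
    (ha : (fun n : ℕ => a (n + 1) - (pm2 * n ^ 2 + pm1 * n + p₀))
      =O[atTop] fun n : ℕ => (n : ℝ) ^ (-(1 : ℝ)))
    (ha' : (fun n : ℕ => a' n - (pm2 * n ^ 2 + pm1' * n + p₀'))
      =O[atTop] fun n : ℕ => (n : ℝ) ^ (-(1 : ℝ)))
    (hb : (fun n : ℕ => b (n + 1) - (q₀ + q₁ * rpowC (-1) n))
      =O[atTop] fun n : ℕ => (n : ℝ) ^ (-(2 : ℝ)))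
    (hb' : (fun n : ℕ => b' n - (q₀' + q₁' * rpowC (-1) n))
      =O[atTop] fun n : ℕ => (n : ℝ) ^ (-(2 : ℝ)))
    (X : ℕ → ℂ)
    (hrec : ∀ n : ℕ, 1 ≤ n →
      (b' n * b (n + 1) + a (n + 1)) * X n + b' n * X n * X (n + 1)
        - a' n * X (n + 1) - a' n * b (n + 1) = 0)
    (τm2 τm1 τ0 τ1 : ℂ)
    (hX : (fun n : ℕ => X n
        - (τm2 * n + τm1 * rpowC (1 / 2) n + τ0 + τ1 * rpowC (-(1 / 2)) n))
      =O[atTop] fun n : ℕ => (n : ℝ) ^ (-(1 : ℝ))) :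
    τm1 * (2 * τm2 * q₀' + pm1 - pm1' - pm2 / 2) = 0 ∧
      τ0 * (2 * τm2 * q₀' + pm1 - pm1')
        = pm1' * q₀ + pm2 * q₁ - τm1 ^ 2 * q₀' - (q₁' + q₀') * τm2 ^ 2
          + (pm1' + p₀' - p₀ - q₀' * q₀) * τm2 := by
  have hrate := natCast_rpow_isLittleO (show (-2 : ℝ) < -1 by norm_num)
  have hnull := tendsto_natCast_rpow_neg one_pos
  exact stmt7_general pm2 pm1 pm1' p₀ p₀' q₀ q₀' q₁ q₁' a a' b b' (ha.trans_tendsto hnull)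
    (ha'.trans_tendsto hnull) (hb.trans_isLittleO hrate) (hb'.trans_isLittleO hrate) X
    ((eventually_ge_atTop 1).mono hrec) τm2 τm1 τ0 (tendsto_sub_tailPrincipalPart hX)
end

section
/- Let p, p₀, p₀', q₀, q₀' be complex numbers with p ≠ 0, q₀ ≠ 0, q₀' ≠ 0, and define a_{n+1} = p·n + p₀, b_{n+1} = q₀. Let u : ℕ → ℂ and complex numbers τ₋₁ ≠ 0, τ₀, τ₁ satisfy u_n = τ₋₁·n^{1/2} + τ₀ + τ₁·n^{−1/2} + O(n^{−1}) as n → ∞ (so in particular q₀ + u_{n+1} ≠ 0 for all sufficiently large n). Then the product sequence I_n := a_{n+1}·u_n/(b_{n+1} + u_{n+1}) satisfies I_n = p·n − (p·q₀/τ₋₁)·n^{1/2} + O(1) as n → ∞. -/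
open Asymptotics Filter

/-!
Put `m = τ * n ^ s` for the leading term of `u n`, and `d = q + u (n + 1)`. Exactly,
`a * u n / d = a - a * q / m + a * q * (d - m) / (m * d) - a * (u (n + 1) - u n) / d`.
Here `a = p * n + p₀` is `O(n)`, and `d` and `m` are of order `n ^ s`. The increments of `u` are
`O(n ^ (s - 1))`, as those of `n ^ s` are, so the last term is bounded. For `s ≤ 1` the difference
`d - m` is bounded, which makes the third term `O(n ^ (1 - 2 * s))`; for `s = 1 / 2` both
errors are `O(1)`.
-/

section RpowC

@[simp]
theorem norm_rpowC (s : ℝ) (n : ℕ) : ‖rpowC s n‖ = (n : ℝ) ^ s :=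
  Complex.norm_of_nonneg (by positivity)

theorem rpowC_zero (n : ℕ) : rpowC 0 n = 1 := by simp [rpowC]

theorem rpowC_one (n : ℕ) : rpowC 1 n = n := by simp [rpowC]

theorem rpowC_sub {n : ℕ} (hn : n ≠ 0) (s t : ℝ) : rpowC (s - t) n = rpowC s n / rpowC t n := by
  simp only [rpowC, Real.rpow_sub (Nat.cast_pos.2 hn.pos), Complex.ofReal_div]

end RpowC

section PowerRates

theorem isBigO_natCast_rpow_natCast_rpow {s t : ℝ} (h : s ≤ t) :
    (fun n : ℕ => (n : ℝ) ^ s) =O[atTop] fun n : ℕ => (n : ℝ) ^ t := by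
  refine .of_norm_eventuallyLE ?_
  filter_upwards [eventually_ge_atTop 1] with n hn
  rw [Real.norm_of_nonneg (by positivity)]
  exact Real.rpow_le_rpow_of_exponent_le (mod_cast hn) h

theorem isLittleO_natCast_rpow_natCast_rpow {s t : ℝ} (h : s < t) :
    (fun n : ℕ => (n : ℝ) ^ s) =o[atTop] fun n : ℕ => (n : ℝ) ^ t := by
  refine isLittleO_of_tendsto' ?_ ?_
  · filter_upwards [eventually_gt_atTop 0] with n hn h0
    exact absurd h0 (by positivity)
  · refine ((tendsto_rpow_neg_atTop (sub_pos.2 h)).comp tendsto_natCast_atTop_atTop).congr' ?_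
    filter_upwards [eventually_gt_atTop 0] with n hn
    rw [Function.comp_apply, neg_sub, Real.rpow_sub (Nat.cast_pos.2 hn)]

theorem isBigO_rpowC {s t : ℝ} (h : s ≤ t) :
    rpowC s =O[atTop] fun n : ℕ => (n : ℝ) ^ t :=
  (isBigO_of_le _ fun n => by simpa using le_abs_self _).trans (isBigO_natCast_rpow_natCast_rpow h)

theorem isBigO_const_natCast_rpow {E : Type*} [Norm E] (c : E) {t : ℝ} (h : 0 ≤ t) :
    (fun _ : ℕ => c) =O[atTop] fun n : ℕ => (n : ℝ) ^ t := by
  refine (isBigO_const_const c (one_ne_zero (α := ℝ)) atTop).trans ?_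
  simpa only [Real.rpow_zero] using isBigO_natCast_rpow_natCast_rpow h

variable {f g : ℕ → ℂ} {r s t : ℝ}

theorem isBigO_mul_natCast_rpow {R : Type*} [SeminormedRing R] {f g : ℕ → R}
    (hf : f =O[atTop] fun n : ℕ => (n : ℝ) ^ s)
    (hg : g =O[atTop] fun n : ℕ => (n : ℝ) ^ t) (h : s + t ≤ r) :
    (fun n => f n * g n) =O[atTop] fun n : ℕ => (n : ℝ) ^ r := by
  refine ((hf.mul hg).congr' .rfl ?_).trans (isBigO_natCast_rpow_natCast_rpow h)
  filter_upwards [eventually_gt_atTop 0] with n hn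
  exact (Real.rpow_add (Nat.cast_pos.2 hn) s t).symm

theorem isBigO_sub_of_isBigO_sub_add_rpowC {c : ℂ}
    (hf : (fun n => f n - (g n + c * rpowC s n)) =O[atTop] fun n : ℕ => (n : ℝ) ^ t)
    (hs : s ≤ r) (ht : t ≤ r) :
    (fun n => f n - g n) =O[atTop] fun n : ℕ => (n : ℝ) ^ r :=
  ((hf.trans (isBigO_natCast_rpow_natCast_rpow ht)).add
    ((isBigO_rpowC hs).const_mul_left c)).congr_left fun n => by ring

theorem isBigO_rpowC_succ_sub (s : ℝ) :
    (fun n => rpowC s (n + 1) - rpowC s n) =O[atTop] fun n : ℕ => (n : ℝ) ^ (s - 1) := by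
  have hlim : Tendsto (fun n : ℕ => 1 + (n : ℝ)⁻¹) atTop (nhds 1) := by
    simpa using (tendsto_inv_atTop_nhds_zero_nat (𝕜 := ℝ)).const_add 1
  have hone : (fun n : ℕ => (1 + (n : ℝ)⁻¹) ^ s - 1) =O[atTop] fun n : ℕ => (n : ℝ)⁻¹ := by
    simpa [Function.comp_def] using
      (Real.hasDerivAt_rpow_const (p := s) (.inl one_ne_zero)).isBigO_sub.comp_tendsto hlim
  refine .of_norm_left (((isBigO_refl (fun n : ℕ => (n : ℝ) ^ s) atTop).mul hone).norm_left.congr'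
    ?_ ?_) <;> filter_upwards [eventually_gt_atTop 0] with n hn
  · have hsucc : ((n + 1 : ℕ) : ℝ) = n * (1 + (n : ℝ)⁻¹) := by
      push_cast
      field_simp
    rw [rpowC, rpowC, ← Complex.ofReal_sub, Complex.norm_real, hsucc,
      Real.mul_rpow (by positivity) (by positivity), mul_sub_one]
  · rw [Real.rpow_sub_one (by positivity), div_eq_mul_inv]

theorem isBigO_natCast_rpow_comp_succ {E : Type*} [Norm E] {f : ℕ → E}
    (hf : f =O[atTop] fun n : ℕ => (n : ℝ) ^ s) :
    (fun n => f (n + 1)) =O[atTop] fun n : ℕ => (n : ℝ) ^ s := by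
  have hsucc : (fun n => rpowC s (n + 1)) =O[atTop] fun n : ℕ => (n : ℝ) ^ s :=
    (((isBigO_rpowC_succ_sub s).trans (isBigO_natCast_rpow_natCast_rpow (by linarith))).add
      (isBigO_rpowC le_rfl)).congr_left fun n => sub_add_cancel _ _
  exact (hf.comp_tendsto (tendsto_add_atTop_nat 1)).trans
    (hsucc.norm_left.congr_left fun n => norm_rpowC s (n + 1))

theorem isBigO_succ_sub_of_isBigO_sub_rpowC_add_const {τ c : ℂ}
    (hf : (fun n => f n - (τ * rpowC s n + c)) =O[atTop] fun n : ℕ => (n : ℝ) ^ (s - 1)) :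
    (fun n => f (n + 1) - f n) =O[atTop] fun n : ℕ => (n : ℝ) ^ (s - 1) :=
  ((((isBigO_rpowC_succ_sub s).const_mul_left τ).add
    (isBigO_natCast_rpow_comp_succ hf)).sub hf).congr_left fun n => by ring

theorem natCast_rpow_isBigO_const_mul_rpowC {τ : ℂ} (hτ : τ ≠ 0) (s : ℝ) :
    (fun n : ℕ => (n : ℝ) ^ s) =O[atTop] fun n => τ * rpowC s n :=
  (isBigO_self_const_mul hτ (rpowC s) atTop).norm_left.congr_left (norm_rpowC s)

theorem natCast_rpow_isBigO_of_isBigO_sub_rpowC {τ : ℂ} (hτ : τ ≠ 0)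
    (hf : (fun n => f n - τ * rpowC s n) =O[atTop] fun n : ℕ => (n : ℝ) ^ t) (hts : t < s) :
    (fun n : ℕ => (n : ℝ) ^ s) =O[atTop] f := by
  have hlead := natCast_rpow_isBigO_const_mul_rpowC hτ s
  have hequiv : IsEquivalent atTop f (fun n => τ * rpowC s n) :=
    (hf.trans_isLittleO (isLittleO_natCast_rpow_natCast_rpow hts)).trans_isBigO hlead
  exact hlead.trans hequiv.isBigO_symm

theorem eventually_ne_zero_of_natCast_rpow_isBigO {E : Type*} [NormedAddCommGroup E] {f : ℕ → E}
    (hf : (fun n : ℕ => (n : ℝ) ^ s) =O[atTop] f) : ∀ᶠ n in atTop, f n ≠ 0 := by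
  filter_upwards [hf.eq_zero_imp, eventually_gt_atTop 0] with n hzero hn hfn
  exact absurd (hzero hfn) (by positivity)

theorem isBigO_inv_of_natCast_rpow_isBigO {K : Type*} [NormedDivisionRing K] {f : ℕ → K}
    (hf : (fun n : ℕ => (n : ℝ) ^ s) =O[atTop] f) :
    (fun n => (f n)⁻¹) =O[atTop] fun n : ℕ => (n : ℝ) ^ (-s) := by
  simp only [Real.rpow_neg (Nat.cast_nonneg _)]
  refine hf.inv_rev ?_
  filter_upwards [eventually_gt_atTop 0] with n hn h0
  exact absurd h0 (by positivity)

end PowerRates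

section TailProduct

theorem mul_div_add_sub_eq {K : Type*} [Field K] {a q u v m : K} (hm : m ≠ 0) (hd : q + v ≠ 0) :
    a * u / (q + v) - (a - a * q / m)
      = a * (q + v - m) * (q * m⁻¹ * (q + v)⁻¹) - a * (v - u) * (q + v)⁻¹ := by
  field_simp
  ring

variable {p p₀ q τ : ℂ} {s : ℝ} {u : ℕ → ℂ}

theorem isBigO_linear_sub_mul_div_rpowC (p p₀ q τ : ℂ) (hs : 0 ≤ s) :
    (fun n : ℕ => ((p * n + p₀) - (p * n + p₀) * q / (τ * rpowC s n))
        - (p * n - p * q / τ * rpowC (1 - s) n))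
      =O[atTop] fun n : ℕ => (n : ℝ) ^ (0 : ℝ) := by
  refine ((isBigO_const_natCast_rpow p₀ le_rfl).sub
    ((isBigO_rpowC (neg_nonpos.2 hs)).const_mul_left (p₀ * q / τ))).congr' ?_ .rfl
  filter_upwards [eventually_ne_atTop 0] with n hn
  rw [← zero_sub s, rpowC_sub hn, rpowC_sub hn, rpowC_zero, rpowC_one]
  ring

theorem isBigO_tail_product_of_isBigO_succ_sub (hs : 0 < s) (hτ : τ ≠ 0)
    (hu : (fun n => u n - τ * rpowC s n) =O[atTop] fun n : ℕ => (n : ℝ) ^ max 0 (s - 1))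
    (hΔu : (fun n => u (n + 1) - u n) =O[atTop] fun n : ℕ => (n : ℝ) ^ (s - 1)) :
    (fun n : ℕ => (p * n + p₀) * u n / (q + u (n + 1))
        - (p * n - p * q / τ * rpowC (1 - s) n))
      =O[atTop] fun n : ℕ => (n : ℝ) ^ max 0 (1 - 2 * s) := by
  have ha : (fun n : ℕ => p * n + p₀) =O[atTop] fun n : ℕ => (n : ℝ) ^ (1 : ℝ) := by
    simpa only [rpowC_one] using
      ((isBigO_rpowC le_rfl).const_mul_left p).add (isBigO_const_natCast_rpow p₀ zero_le_one)
  have hdev : (fun n => q + u (n + 1) - τ * rpowC s n)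
      =O[atTop] fun n : ℕ => (n : ℝ) ^ max 0 (s - 1) :=
    (((isBigO_const_natCast_rpow q (le_max_left _ _)).add
      (hΔu.trans (isBigO_natCast_rpow_natCast_rpow (le_max_right _ _)))).add hu).congr_left
        fun n => by ring
  have hlead := natCast_rpow_isBigO_const_mul_rpowC hτ s
  have hden := natCast_rpow_isBigO_of_isBigO_sub_rpowC hτ hdev (max_lt hs (sub_one_lt s))
  have hden_inv := isBigO_inv_of_natCast_rpow_isBigO hden
  have hmain : (fun n : ℕ => (p * n + p₀) * (q + u (n + 1) - τ * rpowC s n)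
      * (q * (τ * rpowC s n)⁻¹ * (q + u (n + 1))⁻¹))
      =O[atTop] fun n : ℕ => (n : ℝ) ^ max 0 (1 - 2 * s) :=
    isBigO_mul_natCast_rpow (isBigO_mul_natCast_rpow ha hdev le_rfl)
      (isBigO_mul_natCast_rpow ((isBigO_inv_of_natCast_rpow_isBigO hlead).const_mul_left q)
        hden_inv le_rfl) (by grind)
  have hincr : (fun n : ℕ => (p * n + p₀) * (u (n + 1) - u n) * (q + u (n + 1))⁻¹)
      =O[atTop] fun n : ℕ => (n : ℝ) ^ max 0 (1 - 2 * s) :=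
    isBigO_mul_natCast_rpow (isBigO_mul_natCast_rpow ha hΔu le_rfl) hden_inv (by grind)
  have hlin := (isBigO_linear_sub_mul_div_rpowC p p₀ q τ hs.le).trans
    (isBigO_natCast_rpow_natCast_rpow (le_max_left 0 (1 - 2 * s)))
  refine ((hmain.sub hincr).add hlin).congr' ?_ .rfl
  filter_upwards [eventually_ne_zero_of_natCast_rpow_isBigO hlead,
    eventually_ne_zero_of_natCast_rpow_isBigO hden] with n hm hd
  rw [← mul_div_add_sub_eq hm hd, sub_add_sub_cancel]

end TailProduct

theorem stmt9_general (p p₀ q : ℂ) {s : ℝ} (hs : 0 < s) (u : ℕ → ℂ) (τ τ0 : ℂ) (hτ : τ ≠ 0)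
    (hu : (fun n => u n - (τ * rpowC s n + τ0)) =O[atTop] fun n : ℕ => (n : ℝ) ^ (s - 1)) :
    (fun n : ℕ => (p * n + p₀) * u n / (q + u (n + 1))
        - (p * n - p * q / τ * rpowC (1 - s) n))
      =O[atTop] fun n : ℕ => (n : ℝ) ^ max 0 (1 - 2 * s) := by
  refine isBigO_tail_product_of_isBigO_succ_sub hs hτ
    (isBigO_sub_of_isBigO_sub_add_rpowC (c := τ0) (s := 0) ?_ (le_max_left _ _) (le_max_right _ _))
    (isBigO_succ_sub_of_isBigO_sub_rpowC_add_const hu)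
  simpa only [rpowC_zero, mul_one] using hu

/-- Class D⁼₁₀: asymptotics of the tail product
`I_n = a_{n+1} u_n / (b_{n+1} + u_{n+1})` with `a_{n+1} = p n + p₀`,
`b_{n+1} = q₀`. -/
theorem stmt9 (p p₀ p₀' q₀ q₀' : ℂ) (hp : p ≠ 0) (hq₀ : q₀ ≠ 0) (hq₀' : q₀' ≠ 0)
    (u : ℕ → ℂ) (τm1 τ0 τ1 : ℂ) (hτm1 : τm1 ≠ 0)
    (hu : (fun n : ℕ => u n
        - (τm1 * rpowC (1 / 2) n + τ0 + τ1 * rpowC (-(1 / 2)) n))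
      =O[atTop] fun n : ℕ => (n : ℝ) ^ (-(1 : ℝ))) :
    (fun n : ℕ => (p * n + p₀) * u n / (q₀ + u (n + 1))
        - (p * n - p * q₀ / τm1 * rpowC (1 / 2) n))
      =O[atTop] fun _ : ℕ => (1 : ℝ) := by
  simpa [show (1 : ℝ) - 2⁻¹ = 2⁻¹ by norm_num] using
    stmt9_general p p₀ q₀ one_half_pos u τm1 τ0 hτm1
      (isBigO_sub_of_isBigO_sub_add_rpowC hu (by norm_num) (by norm_num))
end
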